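/- Let p be an odd prime and G a finite p-group of nilpotency class 2 with G^p = γ₂(G), |γ₂(G)| = p^k and d(G) = d. Then |M(G)| ≤ p^{(1/2)d(d-1) + (1/2)k(k-3)}. -/

import Mathlib

/-- The Schur multiplier of a group `G`: the second cohomology group `H²(G, ℂˣ)`
of `G` with coefficients in `ℂˣ` (with trivial `G`-action), as in the paper. -/
noncomputable def schurMultiplier (G : Type) [Group G] : Type :=
  groupCohomology (Rep.trivial ℤ G (Additive ℂˣ)) 2

/-!
Write `γ₂` for the derived subgroup of `G`, `Q = G / γ₂` and `A = ℂˣ`. The commutator map of the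
central extension of `G` by `A` attached to a class in `H²(G, A)` restricts to a pairing
`G × γ₂ → A`. It vanishes at `(g, g ^ p)`, because `g` commutes with its powers in any extension.
As `p` is odd, `g ↦ g ^ p` is a homomorphism, and it maps onto `γ₂`, so such a pairing is
determined by its values on pairs `(y i, y j ^ p)` with `j < i`, where `y 1 ^ p, …, y k ^ p`
generate `γ₂`. There are at most `p ^ (k choose 2)` of them.

If the pairing is trivial, the divisibility of `A` makes the class inflated from `Q`. Inflation
`H²(Q, A) → H²(G, A)` has a kernel of order at least `|Hom(γ₂, A)| = p ^ k`, by transgression, and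
`H²(Q, A)` embeds into the alternating forms on the `d`-generator group `Q` of exponent `p`, of
which there are at most `p ^ (d choose 2)`. Altogether
`|M(G)| * p ^ k ≤ p ^ (k choose 2 + d choose 2)`.
-/

section AlternatingPairings

variable {G N : Type*} [AddGroup G] [AddGroup N] (φ : G →+ N) (A : Type*) [AddCommGroup A]

/-- The biadditive pairings `β : G × N → A` that are alternating along `φ : G → N`, i.e.
`β g (φ g) = 0` for all `g`. For `φ = id` these are the usual alternating forms on `G`. -/
def alternatingPairings : AddSubgroup (G →+ N →+ A) where
  carrier := {β | ∀ g, β g (φ g) = 0}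
  zero_mem' _ := rfl
  add_mem' hβ hγ g := by
    rw [AddMonoidHom.add_apply, AddMonoidHom.add_apply, hβ g, hγ g, add_zero]
  neg_mem' hβ g := by rw [AddMonoidHom.neg_apply, AddMonoidHom.neg_apply, hβ g, neg_zero]

variable {φ A}

lemma alternatingPairings.antisymm {β : G →+ N →+ A} (hβ : β ∈ alternatingPairings φ A)
    (g h : G) : β g (φ h) = -β h (φ g) := by
  have hgh := hβ (g + h)
  simp only [map_add, AddMonoidHom.add_apply, hβ g, hβ h, zero_add, add_zero] at hgh
  exact eq_neg_of_add_eq_zero_right hgh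

variable {n : ℕ} {y : Fin n → G}

lemma eq_zero_of_mem_alternatingPairings {β : G →+ N →+ A} (hβ : β ∈ alternatingPairings φ A)
    (hy : AddSubgroup.closure (Set.range (φ ∘ y)) = ⊤)
    (h0 : ∀ i j, j < i → β (y i) (φ (y j)) = 0) : β = 0 := by
  have eq_zero_of_generators (f : N →+ A) (hf : ∀ j, f (φ (y j)) = 0) : f = 0 :=
    AddMonoidHom.eq_of_eqOn_dense hy (by rintro _ ⟨j, rfl⟩; exact hf j)
  have hgen (i j : Fin n) : β (y i) (φ (y j)) = 0 := by
    rcases lt_trichotomy i j with h | rfl | h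
    · rw [alternatingPairings.antisymm hβ, h0 j i h, neg_zero]
    · exact hβ (y i)
    · exact h0 i j h
  ext1 g
  refine eq_zero_of_generators _ fun j ↦ ?_
  rw [alternatingPairings.antisymm hβ, eq_zero_of_generators _ (hgen j), AddMonoidHom.zero_apply,
    neg_zero]

variable {m : ℕ}

/-- The matrix of a pairing alternating along `φ` below the diagonal, with respect to elements
`y i` and `φ (y j)`; its entries are `m`-torsion if `N` is. -/
def alternatingPairings.lowerEntries (hm : ∀ v : N, m • v = 0) (y : Fin n → G)
    (β : alternatingPairings φ A) (ij : (i : Fin n) × Fin i) : {a : A // m • a = 0} :=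
  ⟨β.1 (y ij.1) (φ (y (Fin.castLE ij.1.2.le ij.2))), by rw [← map_nsmul, hm, map_zero]⟩

lemma alternatingPairings.lowerEntries_injective (hm : ∀ v : N, m • v = 0)
    (hy : AddSubgroup.closure (Set.range (φ ∘ y)) = ⊤) :
    Function.Injective (lowerEntries (φ := φ) (A := A) hm y) := by
  intro β γ h
  refine Subtype.ext (sub_eq_zero.mp (eq_zero_of_mem_alternatingPairings
    (sub_mem β.2 γ.2) hy fun i j hij ↦ ?_))
  exact sub_eq_zero.mpr (congrArg Subtype.val (congrFun h ⟨i, ⟨j, hij⟩⟩))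

lemma card_sigma_fin (n : ℕ) : Nat.card ((i : Fin n) × Fin i) = n.choose 2 := by
  rw [Nat.card_eq_fintype_card, Fintype.card_sigma]
  simp only [Fintype.card_fin]
  rw [Fin.sum_univ_eq_sum_range (fun i ↦ i), Finset.sum_range_id, Nat.choose_two_right]

variable [Finite {a : A // m • a = 0}]

lemma finite_alternatingPairings (hm : ∀ v : N, m • v = 0)
    (hy : AddSubgroup.closure (Set.range (φ ∘ y)) = ⊤) : Finite (alternatingPairings φ A) :=
  Finite.of_injective _ (alternatingPairings.lowerEntries_injective hm hy)

lemma card_alternatingPairings_le (hm : ∀ v : N, m • v = 0)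
    (hy : AddSubgroup.closure (Set.range (φ ∘ y)) = ⊤) :
    Nat.card (alternatingPairings φ A) ≤ Nat.card {a : A // m • a = 0} ^ n.choose 2 :=
  calc Nat.card (alternatingPairings φ A)
      ≤ Nat.card (((i : Fin n) × Fin i) → {a : A // m • a = 0}) :=
        Nat.card_le_card_of_injective _ (alternatingPairings.lowerEntries_injective hm hy)
    _ = Nat.card {a : A // m • a = 0} ^ n.choose 2 := by
        rw [Nat.card_fun, card_sigma_fin]

end AlternatingPairings

section TrivialCoefficients

open groupCohomology

variable (G : Type) (A : Type*) [Group G] [AddCommGroup A]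

/-- The inhomogeneous 2-cocycles `Z²(G, A)` with trivial action on `A`, not necessarily
normalised. -/
noncomputable abbrev trivialCocycles₂ : AddSubgroup (G × G → A) :=
  (cocycles₂ (Rep.trivial ℤ G A)).toAddSubgroup

/-- The 2-coboundaries `B²(G, A)` with trivial action on `A`. -/
noncomputable abbrev trivialCoboundaries₂ : AddSubgroup (G × G → A) :=
  (coboundaries₂ (Rep.trivial ℤ G A)).toAddSubgroup

/-- The cohomology group `H²(G, A)` with trivial action on `A`, as the explicit quotient of
2-cocycles by 2-coboundaries. -/
abbrev TrivialH2 : Type _ :=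
  trivialCocycles₂ G A ⧸ (trivialCoboundaries₂ G A).addSubgroupOf (trivialCocycles₂ G A)

variable {G A}

lemma mem_trivialCocycles₂_iff {c : G × G → A} :
    c ∈ trivialCocycles₂ G A ↔ ∀ g h j, c (g * h, j) + c (g, h) = c (h, j) + c (g, h * j) :=
  mem_cocycles₂_iff (A := Rep.trivial ℤ G A) c

lemma mem_trivialCoboundaries₂_iff {c : G × G → A} :
    c ∈ trivialCoboundaries₂ G A ↔ ∃ τ : G → A, ∀ g h, c (g, h) = τ g + τ h - τ (g * h) := by
  have d₁₂_apply (τ : G → A) (g h : G) :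
      d₁₂ (Rep.trivial ℤ G A) τ (g, h) = τ g + τ h - τ (g * h) :=
    (add_comm _ _).trans (add_sub_assoc _ _ _).symm
  refine exists_congr fun τ ↦ ?_
  rw [funext_iff, Prod.forall]
  exact forall₂_congr fun g h ↦ by rw [d₁₂_apply, eq_comm]

lemma trivialCoboundaries₂_le_trivialCocycles₂ : trivialCoboundaries₂ G A ≤ trivialCocycles₂ G A :=
  coboundaries₂_le_cocycles₂ (Rep.trivial ℤ G A)

lemma TrivialH2.mk_eq_zero_iff {c : trivialCocycles₂ G A} :
    (c : TrivialH2 G A) = 0 ↔ ∃ τ : G → A, ∀ g h, c.1 (g, h) = τ g + τ h - τ (g * h) := by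
  rw [QuotientAddGroup.eq_zero_iff, AddSubgroup.mem_addSubgroupOf, mem_trivialCoboundaries₂_iff]

lemma card_schurMultiplier (G : Type) [Group G] :
    Nat.card (schurMultiplier G) = Nat.card (TrivialH2 G (Additive ℂˣ)) := by
  let M := Rep.trivial ℤ G (Additive ℂˣ)
  let f : trivialCocycles₂ G (Additive ℂˣ) →+ groupCohomology M 2 :=
    (H2π M).hom.toAddMonoidHom
  have surjective_f : Function.Surjective f := fun x ↦ H2_induction_on x fun c ↦ ⟨c, rfl⟩
  have ker_f : f.ker = (trivialCoboundaries₂ G (Additive ℂˣ)).addSubgroupOf _ := by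
    ext c
    exact H2π_eq_zero_iff (A := M) c
  exact Nat.card_congr ((QuotientAddGroup.quotientAddEquivOfEq ker_f.symm).trans
    (QuotientAddGroup.quotientKerEquivOfSurjective f surjective_f)).symm.toEquiv

lemma trivialCocycles₂.one_left (c : trivialCocycles₂ G A) (g : G) : c.1 (1, g) = c.1 (1, 1) :=
  cocycles₂_map_one_fst (A := Rep.trivial ℤ G A) c g

lemma trivialCocycles₂.one_right (c : trivialCocycles₂ G A) (g : G) : c.1 (g, 1) = c.1 (1, 1) :=
  cocycles₂_map_one_snd (A := Rep.trivial ℤ G A) c g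

variable {H : Type} [Group H]

/-- Restriction of 2-cocycles along a group homomorphism. -/
noncomputable def trivialCocycles₂.comap (f : G →* H) :
    trivialCocycles₂ H A →+ trivialCocycles₂ G A where
  toFun c := ⟨c.1 ∘ Prod.map f f, mem_trivialCocycles₂_iff.mpr fun g h j ↦ by
    simpa using mem_trivialCocycles₂_iff.mp c.2 (f g) (f h) (f j)⟩
  map_zero' := rfl
  map_add' _ _ := rfl

/-- The map `H²(H, A) → H²(G, A)` induced by `f : G → H`; it is the inflation map when `f` is
surjective. -/
noncomputable def TrivialH2.comap (f : G →* H) : TrivialH2 H A →+ TrivialH2 G A :=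
  QuotientAddGroup.map _ _ (trivialCocycles₂.comap f) fun c hc ↦ by
    rw [AddSubgroup.mem_addSubgroupOf, mem_trivialCoboundaries₂_iff] at hc
    obtain ⟨τ, hτ⟩ := hc
    rw [AddSubgroup.mem_comap, AddSubgroup.mem_addSubgroupOf, mem_trivialCoboundaries₂_iff]
    exact ⟨τ ∘ f, fun g h ↦ by simpa [trivialCocycles₂.comap] using hτ (f g) (f h)⟩

end TrivialCoefficients

section CommutatorPairing

variable {G : Type} {N A : Type*} [Group G] [Group N] [AddCommGroup A]

lemma trivialCocycles₂.skew_mul_left {c : G × G → A} (hc : c ∈ trivialCocycles₂ G A) {g h w : G}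
    (hg : Commute g w) (hh : Commute h w) :
    c (g * h, w) - c (w, g * h) = (c (g, w) - c (w, g)) + (c (h, w) - c (w, h)) := by
  have hghw := mem_trivialCocycles₂_iff.mp hc g h w
  have hgwh := mem_trivialCocycles₂_iff.mp hc g w h
  have hwgh := mem_trivialCocycles₂_iff.mp hc w g h
  rw [hg.eq] at hgwh
  rw [hh.eq] at hghw
  grind

lemma trivialCocycles₂.skew_mul_right {c : G × G → A} (hc : c ∈ trivialCocycles₂ G A) {g v w : G}
    (hv : Commute g v) (hw : Commute g w) :
    c (g, v * w) - c (v * w, g) = (c (g, v) - c (v, g)) + (c (g, w) - c (w, g)) := by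
  have hvw := trivialCocycles₂.skew_mul_left hc hv.symm hw.symm
  grind

lemma trivialCocycles₂.pow_self (c : trivialCocycles₂ G A) (g : G) (n : ℕ) :
    c.1 (g, g ^ n) = c.1 (g ^ n, g) := by
  induction n with
  | zero => rw [pow_zero, trivialCocycles₂.one_left, trivialCocycles₂.one_right]
  | succ n ih =>
    have h := mem_trivialCocycles₂_iff.mp c.2 g (g ^ n) g
    rw [← pow_succ, ← pow_succ', ih, add_comm (c.1 (g ^ n, g))] at h
    exact (add_right_cancel h).symm

variable {ψ : N →* G} (hψ : ∀ g n, Commute g (ψ n))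

/-- The biadditive pairing `(g, n) ↦ c (g, ψ n) - c (ψ n, g)` of a 2-cocycle `c` on `G`, where
`ψ : N → G` has central image. It is the commutator map of the central extension of `G` by `A`
given by `c`. -/
noncomputable def trivialCocycles₂.commPairing :
    trivialCocycles₂ G A →+ Additive G →+ Additive N →+ A :=
  AddMonoidHom.mk' (fun c ↦ AddMonoidHom.mk' (fun g ↦ AddMonoidHom.mk'
    (fun n ↦ c.1 (g.toMul, ψ n.toMul) - c.1 (ψ n.toMul, g.toMul))
    fun n n' ↦ by
      simpa only [toMul_add, map_mul] using
        trivialCocycles₂.skew_mul_right c.2 (hψ _ n.toMul) (hψ _ n'.toMul))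
    fun g g' ↦ AddMonoidHom.ext fun n ↦
      trivialCocycles₂.skew_mul_left c.2 (hψ g.toMul n.toMul) (hψ g'.toMul n.toMul))
    fun _ _ ↦ AddMonoidHom.ext fun _ ↦ AddMonoidHom.ext fun _ ↦ add_sub_add_comm _ _ _ _

/-- The map induced on `H²(G, A)` by `trivialCocycles₂.commPairing`. -/
noncomputable def TrivialH2.commPairing : TrivialH2 G A →+ Additive G →+ Additive N →+ A :=
  QuotientAddGroup.lift _ (trivialCocycles₂.commPairing hψ) fun c hc ↦ by
    obtain ⟨τ, hτ⟩ := TrivialH2.mk_eq_zero_iff.mp ((QuotientAddGroup.eq_zero_iff c).mpr hc)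
    refine AddMonoidHom.ext fun g ↦ AddMonoidHom.ext fun n ↦ ?_
    change c.1 (g.toMul, ψ n.toMul) - c.1 (ψ n.toMul, g.toMul) = 0
    rw [hτ, hτ, (hψ g.toMul n.toMul).eq, add_comm (τ g.toMul), sub_self]

lemma TrivialH2.commPairing_mk_eq_zero_iff (c : trivialCocycles₂ G A) :
    TrivialH2.commPairing hψ (c : TrivialH2 G A) = 0 ↔ ∀ g n, c.1 (g, ψ n) = c.1 (ψ n, g) := by
  refine ⟨fun h g n ↦ sub_eq_zero.mp (DFunLike.congr_fun (DFunLike.congr_fun h g) n), fun h ↦ ?_⟩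
  exact AddMonoidHom.ext fun g ↦ AddMonoidHom.ext fun n ↦ sub_eq_zero.mpr (h g n)

lemma TrivialH2.range_commPairing_le {φ : G →* N} {m : ℕ} (hφ : ∀ g, ψ (φ g) = g ^ m) :
    (TrivialH2.commPairing hψ).range ≤ alternatingPairings (A := A) φ.toAdditive := by
  rintro _ ⟨x, rfl⟩
  obtain ⟨c, rfl⟩ := QuotientAddGroup.mk_surjective x
  intro g
  change c.1 (g.toMul, ψ (φ g.toMul)) - c.1 (ψ (φ g.toMul), g.toMul) = 0
  rw [hφ, trivialCocycles₂.pow_self, sub_self]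

end CommutatorPairing

section Splitting

variable {G : Type} {A : Type*} [Group G] [AddCommGroup A]

/-- The underlying set `A × G` of the central extension of `G` by `A` given by a 2-cocycle. It is
written additively, since it is used for commutative `G` and symmetric `c` only. -/
@[ext]
structure CocycleExtension (c : trivialCocycles₂ G A) where
  fst : A
  snd : G

namespace CocycleExtension

variable {c : trivialCocycles₂ G A}

instance : Add (CocycleExtension c) where
  add x y := ⟨x.fst + y.fst + c.1 (x.snd, y.snd), x.snd * y.snd⟩

instance : Zero (CocycleExtension c) where
  zero := ⟨-c.1 (1, 1), 1⟩

instance : Neg (CocycleExtension c) where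
  neg x := ⟨-x.fst - c.1 (x.snd⁻¹, x.snd) - c.1 (1, 1), x.snd⁻¹⟩

lemma add_def (x y : CocycleExtension c) :
    x + y = ⟨x.fst + y.fst + c.1 (x.snd, y.snd), x.snd * y.snd⟩ := rfl

lemma zero_def : (0 : CocycleExtension c) = ⟨-c.1 (1, 1), 1⟩ := rfl

lemma neg_def (x : CocycleExtension c) :
    -x = ⟨-x.fst - c.1 (x.snd⁻¹, x.snd) - c.1 (1, 1), x.snd⁻¹⟩ := rfl

instance : AddGroup (CocycleExtension c) :=
  AddGroup.ofLeftAxioms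
    (fun x y z ↦ by
      have h := mem_trivialCocycles₂_iff.mp c.2 x.snd y.snd z.snd
      ext
      · simp only [add_def]
        grind
      · exact mul_assoc _ _ _)
    (fun x ↦ by
      ext
      · simp only [add_def, zero_def, trivialCocycles₂.one_left]
        abel
      · exact one_mul _)
    (fun x ↦ by
      ext
      · simp only [add_def, zero_def, neg_def]
        abel
      · exact inv_mul_cancel _)

/-- The embedding of the kernel; the shift by `c (1, 1)` is needed as `c` is not normalised. -/
def inl (c : trivialCocycles₂ G A) : A →+ CocycleExtension c :=
  AddMonoidHom.mk' (fun a ↦ ⟨a - c.1 (1, 1), 1⟩) fun a b ↦ by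
    ext
    · simp only [add_def, mul_one]
      abel
    · exact (mul_one _).symm

lemma inl_injective (c : trivialCocycles₂ G A) : Function.Injective (inl c) := fun _ _ h ↦
  sub_left_injective (congrArg fst h)

lemma mk_zero_add_mk_zero (g h : G) :
    (⟨0, g⟩ + ⟨0, h⟩ : CocycleExtension c) = inl c (c.1 (g, h)) + ⟨0, g * h⟩ := by
  ext
  · simp [add_def, inl, trivialCocycles₂.one_left]
  · exact (one_mul _).symm

end CocycleExtension

lemma exists_eq_coboundary_of_symm [IsMulCommutative G] (hA : Module.Baer ℤ A)
    (c : trivialCocycles₂ G A) (hc : ∀ g h, c.1 (g, h) = c.1 (h, g)) :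
    ∃ τ : G → A, ∀ g h, c.1 (g, h) = τ g + τ h - τ (g * h) := by
  let : AddCommGroup (CocycleExtension c) :=
    { add_comm x y := by
        ext
        · simp only [CocycleExtension.add_def, hc x.snd, add_comm x.fst]
        · exact mul_comm' _ _ }
  -- The extension is abelian, so its kernel, being injective, is a direct summand.
  obtain ⟨r, hr⟩ := hA.extension_property_addMonoidHom (CocycleExtension.inl c)
    (CocycleExtension.inl_injective c) (AddMonoidHom.id A)
  refine ⟨fun g ↦ r ⟨0, g⟩, fun g h ↦ ?_⟩
  rw [eq_sub_iff_add_eq, ← map_add, CocycleExtension.mk_zero_add_mk_zero, map_add]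
  exact congrArg (· + _) (DFunLike.congr_fun hr _).symm

lemma TrivialH2.commPairing_id_injective {Q : Type} [CommGroup Q] (hA : Module.Baer ℤ A) :
    Function.Injective
      (TrivialH2.commPairing (A := A) (ψ := MonoidHom.id Q) fun g n ↦ Commute.all g n) := by
  rw [injective_iff_map_eq_zero]
  intro x hx
  obtain ⟨c, rfl⟩ := QuotientAddGroup.mk_surjective x
  rw [TrivialH2.commPairing_mk_eq_zero_iff] at hx
  exact TrivialH2.mk_eq_zero_iff.mpr (exists_eq_coboundary_of_symm hA c hx)

end Splitting

section Inflation

variable {G Q : Type} {A : Type*} [Group G] [Group Q] [AddCommGroup A]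

lemma exists_extension_of_trivialization_on_subgroup {N : Subgroup G}
    (c : trivialCocycles₂ G A) {s : N → A} (hs : ∀ v w : N, c.1 (v, w) = s v + s w - s (v * w)) :
    ∃ τ : G → A, (∀ w : N, τ w = s w) ∧
      ∀ (w : N) (g : G), c.1 (w, g) = τ w + τ g - τ (w * g) := by
  -- Factor `g = n g * t g` along a transversal; the cocycle identity at `(w, n g, t g)` dictates
  -- the value of `τ`.
  obtain ⟨T, hT, one_mem⟩ := N.exists_isComplement_right 1
  let n (g : G) : N := (hT.equiv g).1
  let t (g : G) : G := (hT.equiv g).2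
  have n_mul_t (g : G) : n g * t g = g := hT.equiv_fst_mul_equiv_snd g
  have n_mul (w : N) (g : G) : n (w * g) = w * n g := congrArg Prod.fst (hT.equiv_mul_left w g)
  have t_mul (w : N) (g : G) : t (w * g) = t g :=
    congrArg (fun x ↦ (x.2 : G)) (hT.equiv_mul_left w g)
  have n_coe (w : N) : n w = w := hT.equiv_fst_eq_self_of_mem_of_one_mem one_mem w.2
  have t_coe (w : N) : t w = 1 :=
    congrArg Subtype.val (hT.equiv_snd_eq_one_of_mem_of_one_mem one_mem w.2)
  have τ_coe (w : N) : s (n w) - c.1 (n w, t w) + c.1 (1, 1) = s w := by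
    rw [n_coe, t_coe, trivialCocycles₂.one_right, sub_add_cancel]
  refine ⟨fun g ↦ s (n g) - c.1 (n g, t g) + c.1 (1, 1), τ_coe, fun w g ↦ ?_⟩
  have h := mem_trivialCocycles₂_iff.mp c.2 w (n g) (t g)
  rw [n_mul_t, hs] at h
  simp only [τ_coe, n_mul, t_mul, Subgroup.coe_mul]
  grind

variable {π : G →* Q}

lemma trivialCocycles₂.eq_of_eq_of_vanishing (c : trivialCocycles₂ G A)
    (hl : ∀ w ∈ π.ker, ∀ g, c.1 (w, g) = 0) (hr : ∀ g, ∀ w ∈ π.ker, c.1 (g, w) = 0)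
    {g g' h h' : G} (hg : π g = π g') (hh : π h = π h') : c.1 (g, h) = c.1 (g', h') := by
  have mul_ker_right (g h) {w} (hw : w ∈ π.ker) : c.1 (g, h * w) = c.1 (g, h) := by
    have hghw := mem_trivialCocycles₂_iff.mp c.2 g h w
    rwa [hr _ w hw, hr _ w hw, zero_add, zero_add, eq_comm] at hghw
  have mul_ker_left (g h) {w} (hw : w ∈ π.ker) : c.1 (g * w, h) = c.1 (g, h) := by
    have hgwh := mem_trivialCocycles₂_iff.mp c.2 g w h
    have hwh : w * h = h * (h⁻¹ * w * h⁻¹⁻¹) := by group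
    rwa [hr g w hw, hl w hw, zero_add, add_zero, hwh,
      mul_ker_right g h (π.normal_ker.conj_mem w hw h⁻¹)] at hgwh
  have inv_mul_mem {g g' : G} (hg : π g = π g') : g⁻¹ * g' ∈ π.ker := by
    rw [MonoidHom.mem_ker, map_mul, map_inv, hg, inv_mul_cancel]
  rw [← mul_ker_left g h (inv_mul_mem hg), ← mul_ker_right _ h (inv_mul_mem hh),
    mul_inv_cancel_left, mul_inv_cancel_left]

lemma trivialCocycles₂.exists_comap_eq_of_vanishing (hπ : Function.Surjective π)
    (c : trivialCocycles₂ G A)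
    (hl : ∀ w ∈ π.ker, ∀ g, c.1 (w, g) = 0) (hr : ∀ g, ∀ w ∈ π.ker, c.1 (g, w) = 0) :
    ∃ b : trivialCocycles₂ Q A, trivialCocycles₂.comap π b = c := by
  have c_congr {g g' h h'} := trivialCocycles₂.eq_of_eq_of_vanishing c hl hr (g := g) (g' := g')
    (h := h) (h' := h')
  let σ := Function.surjInv hπ
  have π_σ (x : Q) : π (σ x) = x := Function.surjInv_eq hπ x
  refine ⟨⟨fun x ↦ c.1 (σ x.1, σ x.2), mem_trivialCocycles₂_iff.mpr fun x y z ↦ ?_⟩,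
    Subtype.ext (funext fun x ↦ c_congr (π_σ _) (π_σ _))⟩
  have σ_mul (x y : Q) : π (σ (x * y)) = π (σ x * σ y) := by simp only [map_mul, π_σ]
  simp only [c_congr (σ_mul x y) rfl, c_congr rfl (σ_mul y z)]
  exact mem_trivialCocycles₂_iff.mp c.2 _ _ _

lemma exists_eq_inflation_add_coboundary (hπ : Function.Surjective π)
    (hcentral : π.ker ≤ Subgroup.center G) (c : trivialCocycles₂ G A)
    (hc : ∀ g, ∀ w ∈ π.ker, c.1 (g, w) = c.1 (w, g)) {s : π.ker → A}
    (hs : ∀ v w : π.ker, c.1 (v, w) = s v + s w - s (v * w)) :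
    ∃ (b : trivialCocycles₂ Q A) (τ : G → A), (∀ w : π.ker, τ w = s w) ∧
      ∀ g h, c.1 (g, h) = b.1 (π g, π h) + (τ g + τ h - τ (g * h)) := by
  obtain ⟨τ, τ_coe, hτ⟩ := exists_extension_of_trivialization_on_subgroup c hs
  let δτ : trivialCocycles₂ G A := ⟨fun x ↦ τ x.1 + τ x.2 - τ (x.1 * x.2),
    trivialCoboundaries₂_le_trivialCocycles₂ (mem_trivialCoboundaries₂_iff.mpr ⟨τ, fun _ _ ↦ rfl⟩)⟩
  have hl : ∀ w ∈ π.ker, ∀ g, (c - δτ).1 (w, g) = 0 := fun w hw g ↦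
    sub_eq_zero.mpr (hτ ⟨w, hw⟩ g)
  have hr : ∀ g, ∀ w ∈ π.ker, (c - δτ).1 (g, w) = 0 := fun g w hw ↦ sub_eq_zero.mpr <| by
    have hgw : g * w = w * g := Subgroup.mem_center_iff.mp (hcentral hw) g
    simp only [δτ, hc g w hw, hτ ⟨w, hw⟩, add_comm (τ g), hgw]
  obtain ⟨b, hb⟩ := trivialCocycles₂.exists_comap_eq_of_vanishing hπ (c - δτ) hl hr
  refine ⟨b, τ, τ_coe, fun g h ↦ sub_eq_iff_eq_add.mp ?_⟩
  exact (congrFun (congrArg Subtype.val hb) (g, h)).symm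

end Inflation

section InflationKernel

variable {G Q : Type} {A : Type*} [Group G] [Group Q] [AddCommGroup A] {π : G →* Q}

lemma TrivialH2.ker_commPairing_le_range_comap (hπ : Function.Surjective π)
    (hcentral : ∀ (g : G) (w : π.ker), Commute g (π.ker.subtype w)) (hA : Module.Baer ℤ A) :
    (TrivialH2.commPairing (A := A) hcentral).ker ≤ (TrivialH2.comap π).range := by
  intro x hx
  obtain ⟨c, rfl⟩ := QuotientAddGroup.mk_surjective x
  have hc := (TrivialH2.commPairing_mk_eq_zero_iff hcentral c).mp hx
  have : IsMulCommutative π.ker := .of_comm fun v w ↦ Subtype.ext (hcentral v w)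
  obtain ⟨s, hs⟩ := exists_eq_coboundary_of_symm hA (trivialCocycles₂.comap π.ker.subtype c)
    fun v w ↦ hc v w
  obtain ⟨b, τ, -, hτ⟩ := exists_eq_inflation_add_coboundary hπ
    (fun w hw ↦ Subgroup.mem_center_iff.mpr fun g ↦ hcentral g ⟨w, hw⟩) c
    (fun g w hw ↦ hc g ⟨w, hw⟩) hs
  refine ⟨b, sub_eq_zero.mp (TrivialH2.mk_eq_zero_iff (c := trivialCocycles₂.comap π b - c).mpr
    ⟨-τ, fun g h ↦ ?_⟩)⟩
  change b.1 (π g, π h) - c.1 (g, h) = -τ g + -τ h - -τ (g * h)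
  rw [hτ]
  abel

lemma exists_transgression (hπ : Function.Surjective π) (hcentral : π.ker ≤ Subgroup.center G)
    (χ : Additive π.ker →+ A) :
    ∃ (b : trivialCocycles₂ Q A) (τ : G → A), (∀ w : π.ker, τ w = χ (.ofMul w)) ∧
      ∀ g h, b.1 (π g, π h) = τ (g * h) - τ g - τ h := by
  obtain ⟨b, τ, hτχ, hτ⟩ := exists_eq_inflation_add_coboundary hπ hcentral
    (0 : trivialCocycles₂ G A) (fun _ _ _ ↦ rfl) (s := fun w ↦ χ (.ofMul w))
    fun v w ↦ by rw [ofMul_mul, map_add, sub_self]; rfl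
  refine ⟨b, τ, hτχ, fun g h ↦ ?_⟩
  rw [eq_neg_of_add_eq_zero_left (hτ g h).symm]
  abel

lemma eq_zero_of_mem_commutator {f : G → A} (hf : ∀ g h, f (g * h) = f g + f h) {w : G}
    (hw : w ∈ commutator G) : f w = 0 :=
  Abelianization.commutator_subset_ker (MonoidHom.mk' (fun g ↦ Multiplicative.ofAdd (f g)) hf) hw

lemma transgression_injective (hcomm : π.ker ≤ commutator G) {b b' : trivialCocycles₂ Q A}
    {τ τ' : G → A} (hτ : ∀ g h, b.1 (π g, π h) = τ (g * h) - τ g - τ h)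
    (hτ' : ∀ g h, b'.1 (π g, π h) = τ' (g * h) - τ' g - τ' h)
    (hone : τ 1 = τ' 1) (hb : (b : TrivialH2 Q A) = b') (w : π.ker) : τ w = τ' w := by
  obtain ⟨σ, hσ⟩ := TrivialH2.mk_eq_zero_iff (c := b - b').mp (sub_eq_zero.mpr hb)
  have map_mul_eq (g h : G) : τ (g * h) - τ' (g * h) + σ (π (g * h)) =
      (τ g - τ' g + σ (π g)) + (τ h - τ' h + σ (π h)) := by
    have hb : b.1 (π g, π h) - b'.1 (π g, π h) = _ := hσ (π g) (π h)
    rw [hτ, hτ', ← map_mul] at hb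
    grind
  have eq_zero (w : π.ker) : τ w - τ' w + σ 1 = 0 := by
    have hw := eq_zero_of_mem_commutator (f := fun g ↦ τ g - τ' g + σ (π g)) map_mul_eq (hcomm w.2)
    rwa [MonoidHom.mem_ker.mp w.2] at hw
  have σ_one : σ 1 = 0 := by simpa [hone] using eq_zero 1
  exact sub_eq_zero.mp (by simpa [σ_one] using eq_zero w)

lemma TrivialH2.exists_injective_ker_comap (hπ : Function.Surjective π)
    (hcentral : π.ker ≤ Subgroup.center G) (hcomm : π.ker ≤ commutator G) :
    ∃ f : (Additive π.ker →+ A) → (TrivialH2.comap (A := A) π).ker, Function.Injective f := by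
  choose b τ hτχ hτ using exists_transgression (A := A) hπ hcentral
  refine ⟨fun χ ↦ ⟨b χ, TrivialH2.mk_eq_zero_iff (c := trivialCocycles₂.comap π (b χ)).mpr
    ⟨-τ χ, fun g h ↦ ?_⟩⟩, fun χ χ' h ↦ AddMonoidHom.ext fun w ↦ ?_⟩
  · change (b χ).1 (π g, π h) = -τ χ g + -τ χ h - -τ χ (g * h)
    rw [hτ]
    abel
  · have hone (χ) : τ χ 1 = 0 := (hτχ χ 1).trans (map_zero χ)
    have hw := transgression_injective hcomm (hτ χ) (hτ χ') ((hone χ).trans (hone χ').symm)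
      (congrArg Subtype.val h) w.toMul
    rwa [hτχ, hτχ] at hw

end InflationKernel

section Counting

variable {G Q : Type} {A : Type*} [Group G] [AddCommGroup A]

lemma card_eq_card_ker_mul_card_range {H K : Type*} [AddGroup H] [AddGroup K] (f : H →+ K) :
    Nat.card H = Nat.card f.ker * Nat.card f.range := by
  rw [← AddSubgroup.index_ker, AddSubgroup.card_mul_index]

variable [CommGroup Q]

lemma TrivialH2.exists_injective_alternatingPairings (hA : Module.Baer ℤ A) :
    ∃ f : TrivialH2 Q A → alternatingPairings (AddMonoidHom.id (Additive Q)) A,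
      Function.Injective f :=
  ⟨fun x ↦ ⟨TrivialH2.commPairing (ψ := MonoidHom.id Q) (fun g n ↦ Commute.all g n) x,
    TrivialH2.range_commPairing_le _ (φ := MonoidHom.id Q) (m := 1) (fun g ↦ (pow_one g).symm)
      ⟨x, rfl⟩⟩,
    fun _ _ h ↦ TrivialH2.commPairing_id_injective hA (congrArg Subtype.val h)⟩

variable {π : G →* Q}

lemma TrivialH2.card_mul_card_hom_le (hA : Module.Baer ℤ A) (hπ : Function.Surjective π)
    (hcentral : π.ker ≤ Subgroup.center G) (hcomm : π.ker ≤ commutator G) {φ : G →* π.ker} {m : ℕ}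
    (hφ : ∀ g, (φ g : G) = g ^ m) [Finite (alternatingPairings φ.toAdditive A)]
    [Finite (alternatingPairings (AddMonoidHom.id (Additive Q)) A)] :
    Nat.card (TrivialH2 G A) * Nat.card (Additive π.ker →+ A) ≤
      Nat.card (alternatingPairings φ.toAdditive A) *
        Nat.card (alternatingPairings (AddMonoidHom.id (Additive Q)) A) := by
  have hψ (g : G) (w : π.ker) : Commute g (π.ker.subtype w) :=
    Subgroup.mem_center_iff.mp (hcentral w.2) g
  let pairing := TrivialH2.commPairing (A := A) hψ
  let inflation := TrivialH2.comap (A := A) π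
  obtain ⟨quotientPairing, quotientPairing_injective⟩ :=
    TrivialH2.exists_injective_alternatingPairings (Q := Q) hA
  obtain ⟨transgression, transgression_injective⟩ :=
    TrivialH2.exists_injective_ker_comap (A := A) hπ hcentral hcomm
  have : Finite (TrivialH2 Q A) := Finite.of_injective _ quotientPairing_injective
  have : Finite inflation.range := Finite.of_surjective _ inflation.rangeRestrict_surjective
  have card_ker_pairing : Nat.card pairing.ker ≤ Nat.card inflation.range :=
    AddSubgroup.card_le_of_le (TrivialH2.ker_commPairing_le_range_comap hπ hψ hA)
  have card_range_pairing :
      Nat.card pairing.range ≤ Nat.card (alternatingPairings φ.toAdditive A) :=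
    AddSubgroup.card_le_of_le (TrivialH2.range_commPairing_le hψ hφ)
  calc Nat.card (TrivialH2 G A) * Nat.card (Additive π.ker →+ A)
      = Nat.card pairing.ker * Nat.card pairing.range * Nat.card (Additive π.ker →+ A) := by
        rw [card_eq_card_ker_mul_card_range pairing]
    _ ≤ Nat.card inflation.range * Nat.card (alternatingPairings φ.toAdditive A) *
          Nat.card inflation.ker :=
        Nat.mul_le_mul (Nat.mul_le_mul card_ker_pairing card_range_pairing)
          (Nat.card_le_card_of_injective _ transgression_injective)
    _ = Nat.card (alternatingPairings φ.toAdditive A) * Nat.card (TrivialH2 Q A) := by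
        rw [card_eq_card_ker_mul_card_range inflation]
        ring
    _ ≤ _ := Nat.mul_le_mul_left _ (Nat.card_le_card_of_injective _ quotientPairing_injective)

end Counting

section PowerMap

open scoped commutatorElement

variable {G : Type*} [Group G]

lemma pow_mul_of_commutatorElement_mem_center {x y : G} (hz : ⁅y, x⁆ ∈ Subgroup.center G)
    (n : ℕ) : y ^ n * x = x * (⁅y, x⁆ ^ n * y ^ n) := by
  have hzc := Subgroup.mem_center_iff.mp hz
  have h : SemiconjBy x (⁅y, x⁆ * y) y := by
    rw [SemiconjBy, ← mul_assoc, hzc x, commutatorElement_def]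
    group
  rw [← Commute.mul_pow (hzc y).symm]
  exact (h.pow_right n).eq.symm

lemma mul_pow_of_commutatorElement_mem_center {x y : G} (hz : ⁅y, x⁆ ∈ Subgroup.center G)
    (n : ℕ) : (x * y) ^ n = ⁅y, x⁆ ^ n.choose 2 * (x ^ n * y ^ n) := by
  induction n with
  | zero => simp
  | succ n ih =>
    have hzn : Commute (x ^ (n + 1)) (⁅y, x⁆ ^ n) :=
      Commute.pow_right (Subgroup.mem_center_iff.mp hz _) n
    have hchoose : (n + 1).choose 2 = n.choose 2 + n := by
      rw [Nat.choose_succ_succ' n 1, Nat.choose_one_right, add_comm]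
    calc (x * y) ^ (n + 1)
        = ⁅y, x⁆ ^ n.choose 2 * (x ^ n * (y ^ n * x) * y) := by
          rw [pow_succ, ih]
          simp only [mul_assoc]
      _ = ⁅y, x⁆ ^ n.choose 2 * (x ^ (n + 1) * ⁅y, x⁆ ^ n * y ^ (n + 1)) := by
          rw [pow_mul_of_commutatorElement_mem_center hz, pow_succ, pow_succ]
          simp only [mul_assoc]
      _ = ⁅y, x⁆ ^ (n + 1).choose 2 * (x ^ (n + 1) * y ^ (n + 1)) := by
          rw [hzn.eq, hchoose, pow_add _ (n.choose 2)]
          simp only [mul_assoc]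

lemma odd_dvd_choose_two {n : ℕ} (hn : Odd n) : n ∣ n.choose 2 := by
  rw [Nat.choose_two_right, Nat.mul_div_assoc _ (hn.tsub_odd odd_one).two_dvd]
  exact dvd_mul_right _ _

lemma commutatorElement_pow_eq_one {x y : G} {n : ℕ} (hz : ⁅y, x⁆ ∈ Subgroup.center G)
    (hy : y ^ n ∈ Subgroup.center G) : ⁅y, x⁆ ^ n = 1 := by
  have h := pow_mul_of_commutatorElement_mem_center hz n
  rwa [← Subgroup.mem_center_iff.mp hy x, mul_right_inj, right_eq_mul] at h

lemma mul_pow_of_odd {x y : G} {n : ℕ} (hn : Odd n) (hz : ⁅y, x⁆ ∈ Subgroup.center G)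
    (hy : y ^ n ∈ Subgroup.center G) : (x * y) ^ n = x ^ n * y ^ n := by
  obtain ⟨m, hm⟩ := odd_dvd_choose_two hn
  rw [mul_pow_of_commutatorElement_mem_center hz, hm, pow_mul, commutatorElement_pow_eq_one hz hy,
    one_pow, one_mul]

/-- The `n`-th power map as a homomorphism into the centre, for odd `n` and a group of class at
most two with central `n`-th powers. -/
def oddPowHom {n : ℕ} (hn : Odd n) (hcomm : commutator G ≤ Subgroup.center G)
    (hpow : ∀ g : G, g ^ n ∈ Subgroup.center G) : G →* Subgroup.center G :=
  MonoidHom.mk' (fun g ↦ ⟨g ^ n, hpow g⟩) fun x y ↦ Subtype.ext <|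
    mul_pow_of_odd hn (hcomm (Subgroup.commutator_mem_commutator (Subgroup.mem_top y)
      (Subgroup.mem_top x))) (hpow y)

lemma pow_eq_one_of_mem_commutator {n : ℕ} (hn : Odd n)
    (hcomm : commutator G ≤ Subgroup.center G) (hpow : ∀ g : G, g ^ n ∈ Subgroup.center G)
    {w : G} (hw : w ∈ commutator G) : w ^ n = 1 := by
  have hker : commutator G ≤ (oddPowHom hn hcomm hpow).ker :=
    Subgroup.commutator_le.mpr fun y hy x hx ↦ Subtype.ext <|
      commutatorElement_pow_eq_one (hcomm (Subgroup.commutator_mem_commutator hy hx)) (hpow y)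
  exact congrArg Subtype.val (hker hw)

end PowerMap

section Generators

lemma exists_fin_rank_closure_eq_top (G : Type*) [Group G] [Group.FG G] :
    ∃ x : Fin (Group.rank G) → G, Subgroup.closure (Set.range x) = ⊤ := by
  obtain ⟨S, hcard, hS⟩ := Group.rank_spec G
  refine ⟨Subtype.val ∘ (S.equivFinOfCardEq hcard).symm, ?_⟩
  rw [EquivLike.range_comp, Subtype.range_coe]
  exact hS

lemma exists_fin_closure_eq_top_of_module {p k : ℕ} [Fact p.Prime] {V : Type*} [AddCommGroup V]
    [Module (ZMod p) V] (hcard : Nat.card V = p ^ k) :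
    ∃ u : Fin k → V, AddSubgroup.closure (Set.range u) = ⊤ := by
  have hp : p.Prime := Fact.out
  have : Finite V := Nat.finite_of_card_ne_zero (hcard ▸ pow_ne_zero k hp.ne_zero)
  have hrank : Module.finrank (ZMod p) V = k := by
    rw [← FiniteField.pow_finrank_eq_natCard p V] at hcard
    exact Nat.pow_right_injective hp.two_le hcard
  let b := Module.finBasisOfFinrankEq (ZMod p) V hrank
  refine ⟨b, (AddSubgroup.toZModSubmodule p).injective (top_unique ?_)⟩
  rw [← b.span_eq, Submodule.span_le]
  exact AddSubgroup.subset_closure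

lemma exists_fin_closure_eq_top_of_card {p k : ℕ} [Fact p.Prime] {V : Type*} [AddCommGroup V]
    (hV : ∀ v : V, p • v = 0) (hcard : Nat.card V = p ^ k) :
    ∃ u : Fin k → V, AddSubgroup.closure (Set.range u) = ⊤ :=
  have := AddCommGroup.zmodModule hV
  exists_fin_closure_eq_top_of_module hcard

lemma closure_range_ofMul_comp_eq_top {ι G H : Type*} [Group G] [Group H] {f : G →* H}
    (hf : Function.Surjective f) {x : ι → G} (hx : Subgroup.closure (Set.range x) = ⊤) :
    AddSubgroup.closure (Set.range fun i ↦ Additive.ofMul (f (x i))) = ⊤ := by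
  have h : Subgroup.closure (Set.range (f ∘ x)) = ⊤ := by
    rw [Set.range_comp, ← MonoidHom.map_closure, hx, Subgroup.map_top_of_surjective f hf]
  rw [← map_top Subgroup.toAddSubgroup, ← h, Subgroup.toAddSubgroup_closure]
  rfl

end Generators

section Units

variable (K : Type*) [Field K]

lemma baer_additive_units [IsAlgClosed K] : Module.Baer ℤ (Additive Kˣ) := by
  have nsmul_surjective {n : ℕ} (hn : n ≠ 0) :
      Function.Surjective fun a : Additive Kˣ ↦ n • a := by
    intro a
    obtain ⟨z, hz⟩ := IsAlgClosed.exists_pow_nat_eq (a.toMul : K) (Nat.pos_of_ne_zero hn)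
    have hz0 : z ≠ 0 := by
      rintro rfl
      rw [zero_pow hn] at hz
      exact a.toMul.ne_zero hz.symm
    exact ⟨.ofMul (Units.mk0 z hz0), congrArg Additive.ofMul (Units.ext hz)⟩
  let : DivisibleBy (Additive Kˣ) ℕ := divisibleByOfSMulRightSurj _ _ nsmul_surjective
  let : DivisibleBy (Additive Kˣ) ℤ := AddGroup.divisibleByIntOfDivisibleByNat _
  exact Module.Baer.of_divisible _

variable (n : ℕ) [NeZero n]

lemma card_torsion_additive_units [HasEnoughRootsOfUnity K n] :
    Nat.card {a : Additive Kˣ // n • a = 0} = n :=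
  HasEnoughRootsOfUnity.natCard_rootsOfUnity K n

instance finite_torsion_additive_units : Finite {a : Additive Kˣ // n • a = 0} :=
  inferInstanceAs (Finite (rootsOfUnity n K))

lemma card_addMonoidHom_units (N : Type*) [CommGroup N] [Finite N]
    [HasEnoughRootsOfUnity K (Monoid.exponent N)] :
    Nat.card (Additive N →+ Additive Kˣ) = Nat.card N :=
  (Nat.card_congr MonoidHom.toAdditive.symm).trans
    (CommGroup.card_monoidHom_of_hasEnoughRootsOfUnity N K)

end Units

section MainInequality

variable {G Q : Type} {A : Type*} [Group G] [CommGroup Q] [AddCommGroup A] {π : G →* Q} {n : ℕ}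

lemma exists_surjective_pow_hom_ker (hn : Odd n) (hcentral : π.ker ≤ Subgroup.center G)
    (hpow : Subgroup.closure (Set.range fun g : G ↦ g ^ n) = π.ker) :
    ∃ φ : G →* π.ker, Function.Surjective φ ∧ ∀ g, (φ g : G) = g ^ n := by
  have hcomm := (Abelianization.commutator_subset_ker π).trans hcentral
  have hmem (g : G) : g ^ n ∈ π.ker := hpow ▸ Subgroup.subset_closure ⟨g, rfl⟩
  let powHom : G →* G :=
    (Subgroup.center G).subtype.comp (oddPowHom hn hcomm fun g ↦ hcentral (hmem g))
  have hrange : π.ker ≤ powHom.range := hpow.ge.trans ((Subgroup.closure_le _).mpr subset_rfl)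
  refine ⟨powHom.codRestrict π.ker hmem, fun w ↦ ?_, fun _ ↦ rfl⟩
  obtain ⟨g, hg⟩ := hrange w.2
  exact ⟨g, Subtype.ext hg⟩

lemma pow_ker_eq_one (hn : Odd n) (hcentral : π.ker ≤ Subgroup.center G)
    (hcomm : π.ker ≤ commutator G) (hpow : ∀ g, g ^ n ∈ π.ker) (w : π.ker) : w ^ n = 1 :=
  Subtype.ext <| pow_eq_one_of_mem_commutator hn
    ((Abelianization.commutator_subset_ker π).trans hcentral) (fun g ↦ hcentral (hpow g))
    (hcomm w.2)

lemma TrivialH2.card_mul_card_hom_le_pow (hA : Module.Baer ℤ A) (hπ : Function.Surjective π)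
    (hcentral : π.ker ≤ Subgroup.center G) (hcomm : π.ker ≤ commutator G) (hn : Odd n)
    (hpow : Subgroup.closure (Set.range fun g : G ↦ g ^ n) = π.ker)
    [Finite {a : A // n • a = 0}] {d k : ℕ}
    {x : Fin d → G} (hx : Subgroup.closure (Set.range x) = ⊤)
    {v : Fin k → Additive π.ker} (hv : AddSubgroup.closure (Set.range v) = ⊤) :
    Nat.card (TrivialH2 G A) * Nat.card (Additive π.ker →+ A) ≤
      Nat.card {a : A // n • a = 0} ^ k.choose 2 * Nat.card {a : A // n • a = 0} ^ d.choose 2 := by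
  have hmem (g : G) : g ^ n ∈ π.ker := hpow ▸ Subgroup.subset_closure ⟨g, rfl⟩
  obtain ⟨φ, surjective_φ, hφ⟩ := exists_surjective_pow_hom_ker hn hcentral hpow
  choose y hy using fun j ↦ surjective_φ (v j).toMul
  have hφy : AddSubgroup.closure (Set.range (φ.toAdditive ∘ fun j ↦ .ofMul (y j))) = ⊤ := by
    rw [← hv]
    exact congrArg (fun u ↦ AddSubgroup.closure (Set.range u)) (funext hy)
  have hπx : AddSubgroup.closure
      (Set.range (AddMonoidHom.id (Additive Q) ∘ fun j ↦ .ofMul (π (x j)))) = ⊤ :=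
    closure_range_ofMul_comp_eq_top hπ hx
  have nsmul_ker (w : Additive π.ker) : n • w = 0 := pow_ker_eq_one hn hcentral hcomm hmem w
  have nsmul_quotient (q : Additive Q) : n • q = 0 := by
    obtain ⟨g, hg⟩ := hπ q.toMul
    have := hmem g
    rwa [MonoidHom.mem_ker, map_pow, hg] at this
  have := finite_alternatingPairings (A := A) nsmul_ker hφy
  have := finite_alternatingPairings (A := A) nsmul_quotient hπx
  exact (TrivialH2.card_mul_card_hom_le hA hπ hcentral hcomm hφ).trans <|
    Nat.mul_le_mul (card_alternatingPairings_le nsmul_ker hφy)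
      (card_alternatingPairings_le nsmul_quotient hπx)

end MainInequality

section SchurMultiplier

lemma commutator_le_center_of_nilpotencyClass_le_two {G : Type*} [Group G] [Group.IsNilpotent G]
    (hc : Group.nilpotencyClass G ≤ 2) : commutator G ≤ Subgroup.center G := by
  rw [← Subgroup.commutator_top_right_eq_bot_iff_le_center]
  exact Subgroup.lowerCentralSeries_eq_bot_iff_nilpotencyClass_le.mpr hc

open scoped IsMulCommutative in
lemma card_schurMultiplier_mul_pow_le {p k : ℕ} (hp : p.Prime) (hodd : Odd p) {G : Type} [Group G]
    [Group.FG G] (hcomm : commutator G ≤ Subgroup.center G)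
    (hpow : Subgroup.closure (Set.range fun g : G ↦ g ^ p) = commutator G)
    (hk : Nat.card (commutator G) = p ^ k) :
    Nat.card (schurMultiplier G) * p ^ k ≤ p ^ k.choose 2 * p ^ (Group.rank G).choose 2 := by
  have : Fact p.Prime := ⟨hp⟩
  let π : G →* Abelianization G := Abelianization.of
  have ker_π : π.ker = commutator G := Abelianization.ker_of G
  rw [← ker_π] at hk hpow hcomm
  have : IsMulCommutative π.ker :=
    .of_comm fun v w ↦ Subtype.ext (Subgroup.mem_center_iff.mp (hcomm w.2) v)
  have : Finite π.ker := Nat.finite_of_card_ne_zero (hk ▸ pow_ne_zero k hp.ne_zero)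
  have : NeZero (Monoid.exponent π.ker) := ⟨Monoid.exponent_ne_zero_of_finite⟩
  obtain ⟨x, hx⟩ := exists_fin_rank_closure_eq_top G
  have nsmul_ker (w : Additive π.ker) : p • w = 0 :=
    pow_ker_eq_one hodd hcomm ker_π.le (fun g ↦ hpow ▸ Subgroup.subset_closure ⟨g, rfl⟩) w
  obtain ⟨v, hv⟩ := exists_fin_closure_eq_top_of_card nsmul_ker hk
  have h := TrivialH2.card_mul_card_hom_le_pow (baer_additive_units ℂ)
    (QuotientGroup.mk'_surjective _) hcomm ker_π.le hodd hpow hx hv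
  rwa [card_torsion_additive_units, card_addMonoidHom_units, hk, ← card_schurMultiplier] at h

end SchurMultiplier

/-- Corollary 2, the case where `p` is odd and `Gᵖ = γ₂(G)`:
`|M(G)| ≤ p ^ (d * (d - 1) / 2 + k * (k - 3) / 2)`. -/
theorem schur_multiplier_upper_bound_class_two_Gp_eq_comm (p k d : ℕ) (hp : p.Prime)
    (hodd : p ≠ 2)
    (G : Type) [Group G] [Finite G] [Group.IsNilpotent G]
    (hpG : IsPGroup p G)
    (hc : Group.nilpotencyClass G = 2)
    (hGp : Subgroup.closure (Set.range fun x : G => x ^ p) = commutator G)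
    (hk : Nat.card (commutator G) = p ^ k)
    (hd : Group.rank G = d) :
    (Nat.card (schurMultiplier G) : ℝ) ≤
      (p : ℝ) ^ ((d : ℝ) * ((d : ℝ) - 1) / 2 + (k : ℝ) * ((k : ℝ) - 3) / 2) := by
  have hmain := card_schurMultiplier_mul_pow_le hp (hp.odd_of_ne_two hodd)
    (commutator_le_center_of_nilpotencyClass_le_two hc.le) hGp hk
  rw [hd, ← pow_add] at hmain
  have hp0 : (0 : ℝ) < p := mod_cast hp.pos
  have hexponent : (d : ℝ) * (d - 1) / 2 + k * (k - 3) / 2 =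
      ((k.choose 2 + d.choose 2 : ℕ) : ℝ) - (k : ℕ) := by
    rw [Nat.cast_add, Nat.cast_choose_two, Nat.cast_choose_two]
    ring
  rw [hexponent, Real.rpow_sub hp0, Real.rpow_natCast, Real.rpow_natCast,
    le_div_iff₀ (pow_pos hp0 k)]
  exact_mod_cast hmain
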